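/- arXiv:math/0405350 — 6 statements merged into one kernel-verified Lean document; each statement's English description precedes it below -/
import Mathlib

section
/- Let k be an algebraically closed field of characteristic zero, let f ∈ k⟨x,y⟩, and let p₁, p₂ ∈ k² be points with f₀(p₁) = f₀(p₂) = 0. Then there exists t ∈ k such that, setting à = k⟨x,y⟩/(f + t(xy − yx)) (the quotient by the two-sided ideal generated by f + t(xy−yx)), one has Ext¹_Ã(k(p₁), k(p₂)) ≠ 0. -/
open CategoryTheory Opposite

noncomputable section

/-- The abelianization map `k⟨x,y⟩ → k[x,y]`. -/
def abel (k : Type) [Field k] : FreeAlgebra k (Fin 2) →ₐ[k] MvPolynomial (Fin 2) k :=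
  FreeAlgebra.lift k MvPolynomial.X

/-- Evaluation of a noncommutative polynomial at a point of `k²`. -/
def evalAt (k : Type) [Field k] (p : Fin 2 → k) : FreeAlgebra k (Fin 2) →ₐ[k] k :=
  FreeAlgebra.lift k p

lemma eval_abel (k : Type) [Field k] (p : Fin 2 → k) (g : FreeAlgebra k (Fin 2)) :
    MvPolynomial.eval p (abel k g) = evalAt k p g := by
  have h : (MvPolynomial.aeval p).comp (abel k) = evalAt k p := by
    apply FreeAlgebra.hom_ext
    funext i
    simp [abel, evalAt]
  have h2 : (MvPolynomial.aeval p) (abel k g) = evalAt k p g := by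
    rw [← h]; rfl
  have h3 : (MvPolynomial.aeval p) (abel k g) = MvPolynomial.eval p (abel k g) := by
    rw [← MvPolynomial.coe_aeval_eq_eval]; rfl
  rw [← h3, h2]

/-- The quotient algebra `k⟨x,y⟩/(f)` of the free algebra by the two-sided ideal
generated by `f`. -/
abbrev quotAlg (k : Type) [Field k] (f : FreeAlgebra k (Fin 2)) : Type :=
  RingQuot (fun a b : FreeAlgebra k (Fin 2) => a = f ∧ b = 0)

/-- The one-dimensional representation of `k⟨x,y⟩/(f)` given by a point `p` of the plane
curve `f₀ = 0`. -/
def pointHom (k : Type) [Field k] (f : FreeAlgebra k (Fin 2)) (p : Fin 2 → k)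
    (h : MvPolynomial.eval p (abel k f) = 0) : quotAlg k f →ₐ[k] k :=
  RingQuot.liftAlgHom k ⟨evalAt k p, by
    rintro a b ⟨rfl, rfl⟩
    rw [← eval_abel k p a, h, map_zero]⟩

/-- The one-dimensional module `k(p)` over `k⟨x,y⟩/(f)`. -/
def pointMod (k : Type) [Field k] (f : FreeAlgebra k (Fin 2)) (p : Fin 2 → k)
    (h : MvPolynomial.eval p (abel k f) = 0) : ModuleCat (quotAlg k f) :=
  letI : Module (quotAlg k f) k := Module.compHom k (pointHom k f p h).toRingHom
  ModuleCat.of (quotAlg k f) k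

/-- `Ext¹` of modules over the `k`-algebra `A` (as a `k`-vector space). -/
def Ext1 (k : Type) [Field k] (A : Type) [Ring A] [Algebra k A] (M N : ModuleCat A) :
    ModuleCat k :=
  ((Ext k (ModuleCat A) 1).obj (op M)).obj N

/-- If `Ext¹(M, N)` is trivial, every extension of `M` by `N` splits. -/
lemma split_of_ext_subsingleton (k : Type) [Field k] (A : Type) [Ring A] [Algebra k A]
    (S : ShortComplex (ModuleCat.{0} A)) (hS : S.ShortExact)
    (h : Subsingleton (Ext1 k A S.X₃ S.X₁)) :
    ∃ s : S.X₃ ⟶ S.X₂, s ≫ S.g = 𝟙 _ := by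
  have := hS.mono_f
  have := hS.epi_g
  let P := ProjectiveResolution.of S.X₃
  have hz : Limits.IsZero (Ext1 k A S.X₃ S.X₁) := ModuleCat.isZero_of_subsingleton _
  have hz2 := hz.of_iso (P.isoExt (R := k) 1 S.X₁).symm
  rw [← HomologicalComplex.exactAt_iff_isZero_homology,
    HomologicalComplex.exactAt_iff' _ 0 1 2 (by simp) (by simp),
    ShortComplex.moduleCat_exact_iff] at hz2
  let π : P.complex.X 0 ⟶ S.X₃ := P.π.f 0
  have hπ : Epi π := inferInstanceAs (Epi (P.π.f 0))
  let l : P.complex.X 0 ⟶ S.X₂ := Projective.factorThru π S.g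
  have hl : l ≫ S.g = π := Projective.factorThru_comp _ _
  have hd : P.complex.d 1 0 ≫ π = 0 := P.complex_d_comp_π_f_zero
  have h0 : (P.complex.d 1 0 ≫ l) ≫ S.g = 0 := by
    rw [Category.assoc, hl, hd]
  let c : P.complex.X 1 ⟶ S.X₁ := hS.exact.lift _ h0
  have hc : c ≫ S.f = P.complex.d 1 0 ≫ l := hS.exact.lift_f _ h0
  have hc2 : P.complex.d 2 1 ≫ c = 0 := by
    rw [← cancel_mono S.f, Category.assoc, hc]
    simp
  obtain ⟨b, hb⟩ := hz2 c hc2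
  let b' : P.complex.X 0 ⟶ S.X₁ := b
  have hb' : P.complex.d 1 0 ≫ b' = c := hb
  have h3 : P.complex.d 1 0 ≫ (l - b' ≫ S.f) = 0 := by
    rw [Preadditive.comp_sub, ← Category.assoc, hb', hc, sub_self]
  have : Epi (ShortComplex.mk _ _ P.complex_d_comp_π_f_zero).g := by
    dsimp; infer_instance
  let s : S.X₃ ⟶ S.X₂ := P.exact₀.desc (l - b' ≫ S.f) h3
  have hs : π ≫ s = l - b' ≫ S.f := P.exact₀.g_desc _ h3
  refine ⟨s, ?_⟩
  have hfin : π ≫ (s ≫ S.g) = π ≫ 𝟙 _ := by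
    rw [← Category.assoc, hs, Preadditive.sub_comp, hl, Category.assoc, S.zero]
    simp
  exact (cancel_epi π).1 hfin

/-- The upper triangular representation of the free algebra. -/
def triHom (k : Type) [Field k] (p₁ p₂ : Fin 2 → k) (u : Fin 2 → k) :
    FreeAlgebra k (Fin 2) →ₐ[k] Matrix (Fin 2) (Fin 2) k :=
  FreeAlgebra.lift k (fun i => !![p₂ i, u i; 0, p₁ i])

lemma triHom_form (k : Type) [Field k] (p₁ p₂ : Fin 2 → k) (f : FreeAlgebra k (Fin 2)) :
    ∃ α β : k, ∀ u : Fin 2 → k, triHom k p₁ p₂ u f =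
      !![evalAt k p₂ f, α * u 0 + β * u 1; 0, evalAt k p₁ f] := by
  induction f using FreeAlgebra.induction with
  | grade0 r =>
    refine ⟨0, 0, fun u => ?_⟩
    ext i j
    fin_cases i <;> fin_cases j <;> simp [Matrix.algebraMap_matrix_apply]
  | grade1 x =>
    fin_cases x
    · refine ⟨1, 0, fun u => ?_⟩
      simp [triHom, evalAt]
    · refine ⟨0, 1, fun u => ?_⟩
      simp [triHom, evalAt]
  | mul a b ha hb =>
    obtain ⟨α, β, ha⟩ := ha
    obtain ⟨α', β', hb⟩ := hb
    refine ⟨evalAt k p₂ a * α' + α * evalAt k p₁ b, evalAt k p₂ a * β' + β * evalAt k p₁ b,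
      fun u => ?_⟩
    rw [map_mul, ha, hb, Matrix.mul_fin_two, map_mul, map_mul]
    ext i j
    fin_cases i <;> fin_cases j <;> simp
    ring
  | add a b ha hb =>
    obtain ⟨α, β, ha⟩ := ha
    obtain ⟨α', β', hb⟩ := hb
    refine ⟨α + α', β + β', fun u => ?_⟩
    rw [map_add, ha, hb, map_add, map_add]
    ext i j
    fin_cases i <;> fin_cases j <;> simp
    ring

/-- A nonsplit upper triangular representation shows that `Ext¹` is nontrivial. -/
lemma ext_nontrivial_of_tri (k : Type) [Field k] (g : FreeAlgebra k (Fin 2))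
    (p₁ p₂ u : Fin 2 → k)
    (h1 : MvPolynomial.eval p₁ (abel k g) = 0)
    (h2 : MvPolynomial.eval p₂ (abel k g) = 0)
    (hg : triHom k p₁ p₂ u g = 0)
    (hu : ¬ ∃ w : k, ∀ i, u i = (p₁ i - p₂ i) * w) :
    Nontrivial (Ext1 k (quotAlg k g) (pointMod k g p₁ h1) (pointMod k g p₂ h2)) := by
  by_contra hn
  rw [not_nontrivial_iff_subsingleton] at hn
  let A := quotAlg k g
  let q : FreeAlgebra k (Fin 2) →ₐ[k] A := RingQuot.mkAlgHom k _
  have hq : Function.Surjective q := RingQuot.mkAlgHom_surjective k _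
  let ρ : A →ₐ[k] Matrix (Fin 2) (Fin 2) k := RingQuot.liftAlgHom k ⟨triHom k p₁ p₂ u, by
    rintro a b ⟨rfl, rfl⟩
    rw [hg, map_zero]⟩
  have hρ : ∀ a, ρ (q a) = triHom k p₁ p₂ u a := fun a =>
    RingQuot.liftAlgHom_mkAlgHom_apply _ _ _ _
  have hP1 : ∀ a, pointHom k g p₁ h1 (q a) = evalAt k p₁ a := fun a =>
    RingQuot.liftAlgHom_mkAlgHom_apply _ _ _ _
  have hP2 : ∀ a, pointHom k g p₂ h2 (q a) = evalAt k p₂ a := fun a =>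
    RingQuot.liftAlgHom_mkAlgHom_apply _ _ _ _
  let ψ : A →+* Module.End k (Fin 2 → k) :=
    ((Matrix.toLinAlgEquiv' (R := k) (n := Fin 2)).toAlgHom.comp ρ).toRingHom
  let _ : Module A (Fin 2 → k) := Module.compHom (Fin 2 → k) ψ
  have hsm : ∀ (a : A) (v : Fin 2 → k), a • v = (ρ a).mulVec v := fun a v => rfl
  have hs1 : ∀ (a : A) (c : k), (show pointMod k g p₁ h1 from
      a • (show pointMod k g p₁ h1 from c)) = pointHom k g p₁ h1 a * c := fun a c => rfl
  have hs2 : ∀ (a : A) (c : k), (show pointMod k g p₂ h2 from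
      a • (show pointMod k g p₂ h2 from c)) = pointHom k g p₂ h2 a * c := fun a c => rfl
  let i : (pointMod k g p₂ h2) →ₗ[A] (Fin 2 → k) :=
    { toFun := fun c => ![(c : k), 0]
      map_add' := by
        intro c d
        ext j
        fin_cases j
        · rfl
        · exact (add_zero (0 : k)).symm
      map_smul' := by
        intro a c
        obtain ⟨a, rfl⟩ := hq a
        obtain ⟨α, β, h⟩ := triHom_form k p₁ p₂ a
        have e : (q a • c : pointMod k g p₂ h2) = (evalAt k p₂ a * (show k from c) : k) := by
          rw [← hP2]; exact hs2 _ _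
        rw [e, RingHom.id_apply, hsm, hρ, h]
        ext j
        fin_cases j
        · simp [Matrix.mulVec, dotProduct]
        · simp [Matrix.mulVec, dotProduct]
          exact (zero_mul (show k from c)).symm }
  let r : (Fin 2 → k) →ₗ[A] (pointMod k g p₁ h1) :=
    { toFun := fun v => (v 1 : k)
      map_add' := by
        intro c d
        rfl
      map_smul' := by
        intro a c
        obtain ⟨a, rfl⟩ := hq a
        obtain ⟨α, β, h⟩ := triHom_form k p₁ p₂ a
        have e : (q a • (show pointMod k g p₁ h1 from c 1) : pointMod k g p₁ h1)
            = (evalAt k p₁ a * c 1 : k) := by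
          rw [← hP1]; exact hs1 _ _
        rw [RingHom.id_apply]
        refine Eq.trans ?_ e.symm
        rw [hsm, hρ, h]
        simp [Matrix.mulVec, dotProduct]
        rfl }
  have hir : Function.Exact i r := by
    intro v
    constructor
    · intro hv
      have hv' : v 1 = 0 := hv
      refine ⟨v 0, ?_⟩
      ext j
      fin_cases j
      · rfl
      · exact hv'.symm
    · rintro ⟨c, rfl⟩
      rfl
  let S : ShortComplex (ModuleCat.{0} A) :=
    ShortComplex.mk (X₁ := pointMod k g p₂ h2) (X₂ := ModuleCat.of A (Fin 2 → k))
      (X₃ := pointMod k g p₁ h1)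
      (show ModuleCat.of A (pointMod k g p₂ h2) ⟶ ModuleCat.of A (Fin 2 → k) from ModuleCat.ofHom i)
      (show ModuleCat.of A (Fin 2 → k) ⟶ ModuleCat.of A (pointMod k g p₁ h1) from ModuleCat.ofHom r) (by
        ext c
        exact (hir _).2 ⟨c, rfl⟩)
  have hS : S.ShortExact :=
    { exact := (ShortComplex.ShortExact.moduleCat_exact_iff_function_exact _).mpr hir
      mono_f := (ModuleCat.mono_iff_injective _).2 (by
        intro c d hcd
        exact congrFun hcd 0)
      epi_g := (ModuleCat.epi_iff_surjective _).2 (by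
        intro c
        exact ⟨![0, c], rfl⟩) }
  obtain ⟨s, hs⟩ := split_of_ext_subsingleton k A S hS hn
  let o : pointMod k g p₁ h1 := (1 : k)
  let v : Fin 2 → k := s.hom o
  have hv1 : v 1 = 1 := by
    have := congrArg (fun m => m.hom o) hs
    exact this
  apply hu
  refine ⟨v 0, fun j => ?_⟩
  have e1 : s.hom (q (FreeAlgebra.ι k j) • o) = q (FreeAlgebra.ι k j) • v := s.hom.map_smul _ _
  have e2 : (q (FreeAlgebra.ι k j) • o : pointMod k g p₁ h1) = q (algebraMap k _ (p₁ j)) • o := by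
    refine (hs1 _ _).trans (Eq.trans ?_ (hs1 _ _).symm)
    rw [hP1, hP1]
    simp [evalAt]
    rfl
  have e3 : s.hom (q (algebraMap k _ (p₁ j)) • o) = q (algebraMap k _ (p₁ j)) • v :=
    s.hom.map_smul _ _
  have e4 : q (FreeAlgebra.ι k j) • v = q (algebraMap k _ (p₁ j)) • v := by
    rw [← e1, ← e3, e2]
  rw [hsm, hsm, hρ, hρ, AlgHom.commutes] at e4
  have e5 := congrFun e4 0
  simp [triHom, Matrix.mulVec, dotProduct, Matrix.algebraMap_matrix_apply, hv1] at e5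
  linear_combination e5

/-- given two points `p₁, p₂` of the plane curve `f₀ = 0`, there is a
noncommutative model `Ã = k⟨x,y⟩/(f + t[x,y])` of the curve with
`Ext¹_Ã(k(p₁), k(p₂)) ≠ 0`. -/
theorem exists_model_with_nonvanishing_ext
    (k : Type) [Field k] [IsAlgClosed k] [CharZero k]
    (f : FreeAlgebra k (Fin 2)) (p₁ p₂ : Fin 2 → k)
    (h1 : MvPolynomial.eval p₁ (abel k f) = 0)
    (h2 : MvPolynomial.eval p₂ (abel k f) = 0) :
    ∃ t : k, Nontrivial (Ext1 k
      (quotAlg k (f + t • (FreeAlgebra.ι k 0 * FreeAlgebra.ι k 1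
          - FreeAlgebra.ι k 1 * FreeAlgebra.ι k 0)))
      (pointMod k (f + t • (FreeAlgebra.ι k 0 * FreeAlgebra.ι k 1
          - FreeAlgebra.ι k 1 * FreeAlgebra.ι k 0)) p₁ (by
        rw [map_add (abel k), map_add, h1, zero_add]
        simp [abel, mul_comm]))
      (pointMod k (f + t • (FreeAlgebra.ι k 0 * FreeAlgebra.ι k 1
          - FreeAlgebra.ι k 1 * FreeAlgebra.ι k 0)) p₂ (by
        rw [map_add (abel k), map_add, h2, zero_add]
        simp [abel, mul_comm]))) := by
  obtain ⟨α, β, hf⟩ := triHom_form k p₁ p₂ f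
  have e1 : evalAt k p₁ f = 0 := by rw [← eval_abel, h1]
  have e2 : evalAt k p₂ f = 0 := by rw [← eval_abel, h2]
  have key : ∀ (t : k) (u : Fin 2 → k),
      α * u 0 + β * u 1 + t * ((p₂ 0 - p₁ 0) * u 1 - (p₂ 1 - p₁ 1) * u 0) = 0 →
      triHom k p₁ p₂ u (f + t • (FreeAlgebra.ι k 0 * FreeAlgebra.ι k 1
          - FreeAlgebra.ι k 1 * FreeAlgebra.ι k 0)) = 0 := by
    intro t u h
    rw [map_add, hf, e1, e2, map_smul, map_sub, map_mul, map_mul]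
    simp only [triHom, FreeAlgebra.lift_ι_apply, Matrix.mul_fin_two]
    ext i j
    fin_cases i <;> fin_cases j <;> simp
    · right; ring
    · linear_combination h
    · right; ring
  by_cases ha : p₂ 0 - p₁ 0 = 0
  · by_cases hb : p₂ 1 - p₁ 1 = 0
    · have ha' : p₁ 0 - p₂ 0 = 0 := by linear_combination -ha
      have hb' : p₁ 1 - p₂ 1 = 0 := by linear_combination -hb
      by_cases hα : α = 0
      · refine ⟨0, ext_nontrivial_of_tri k _ p₁ p₂ ![1, 0] _ _ (key _ _ (by simp [hα])) ?_⟩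
        rintro ⟨w, hw⟩
        have := hw 0
        simp [ha'] at this
      · refine ⟨0, ext_nontrivial_of_tri k _ p₁ p₂ ![-β, α] _ _
          (key _ _ (by simp; ring)) ?_⟩
        rintro ⟨w, hw⟩
        have := hw 1
        simp [hb', hα] at this
    · refine ⟨α / (p₂ 1 - p₁ 1), ext_nontrivial_of_tri k _ p₁ p₂ ![1, 0] _ _
        (key _ _ (by simp; field_simp; ring)) ?_⟩
      rintro ⟨w, hw⟩
      have := hw 0
      have ha' : p₁ 0 - p₂ 0 = 0 := by linear_combination -ha
      simp [ha'] at this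
  · refine ⟨-β / (p₂ 0 - p₁ 0), ext_nontrivial_of_tri k _ p₁ p₂ ![0, 1] _ _
      (key _ _ (by simp; field_simp; ring)) ?_⟩
    rintro ⟨w, hw⟩
    have h0 := hw 0
    have h1' := hw 1
    have ha' : p₁ 0 - p₂ 0 ≠ 0 := fun h => ha (by linear_combination -h)
    have hw0 : w = 0 := by simpa [ha'] using h0
    simp [hw0] at h1'

end
end

section
/- Let k be an algebraically closed field of characteristic zero and let f ∈ k⟨x,y⟩ be such that its abelianization f₀ ∈ k[x,y] is reduced (squarefree) and admits a proper factorisation f₀ = g·h with g, h nonconstant polynomials. Set A = k⟨x,y⟩/(f) and assume that Ext¹_A(k(p₁), k(p₂)) ≠ 0 for every p₁ ∈ k² with h(p₁) = 0 and every p₂ ∈ k² with g(p₂) = 0. Then there exist ĝ, ĥ ∈ k⟨x,y⟩ with abelianizations (ĝ)₀ = g and (ĥ)₀ = h such that f − ĝĥ ∈ J², where J is the two-sided ideal of k⟨x,y⟩ generated by xy − yx. -/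
open CategoryTheory Opposite

noncomputable section

lemma ext1_subsingleton (k : Type) [Field k] (A : Type) [Ring A] [Algebra k A] (M N : ModuleCat.{0} A)
    (H : ∀ (P : ModuleCat.{0} A) (π : P →ₗ[A] M), Function.Surjective π →
      ∀ φ : LinearMap.ker π →ₗ[A] N, ∃ ψ : P →ₗ[A] N, ∀ z : LinearMap.ker π, ψ z = φ z) :
    Subsingleton (Ext1 k A M N) := by
  let P := ProjectiveResolution.of M
  apply ModuleCat.subsingleton_of_isZero
  refine Limits.IsZero.of_iso ?_ (P.isoExt 1 N)
  rw [← HomologicalComplex.exactAt_iff_isZero_homology, 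
    HomologicalComplex.exactAt_iff' _ 0 1 2 (by simp) (by simp), ShortComplex.moduleCat_exact_iff]
  intro x hx
  have hx2 : P.complex.d 2 1 ≫ (x : P.complex.X 1 ⟶ N) = 0 := hx
  let x' : P.complex.X 1 ⟶ N := x
  let π : P.complex.X 0 →ₗ[A] M := (P.π.f 0).hom
  have hπ : Function.Surjective π := by
    have : Epi (P.π.f 0) := inferInstance
    exact (ModuleCat.epi_iff_surjective _).1 this
  let d : P.complex.X 1 →ₗ[A] LinearMap.ker π := LinearMap.codRestrict _ (P.complex.d 1 0).hom (by
    intro c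
    have := P.complex_d_comp_π_f_zero
    exact congrArg (fun q => q.hom c) this)
  have hd : Function.Surjective d := by
    rintro ⟨z, hz⟩
    have := (ShortComplex.moduleCat_exact_iff _).1 P.exact₀ z hz
    obtain ⟨w, hw⟩ := this
    exact ⟨w, Subtype.ext hw⟩
  have hker : LinearMap.ker d ≤ LinearMap.ker x'.hom := by
    intro w hw
    have hw' : (P.complex.d 1 0).hom w = 0 := congrArg Subtype.val (LinearMap.mem_ker.1 hw)
    obtain ⟨v, hv⟩ := (ShortComplex.moduleCat_exact_iff _).1 (P.exact_succ 0) w hw'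
    rw [LinearMap.mem_ker, ← hv]
    exact congrArg (fun q => q.hom v) hx2
  let φ : LinearMap.ker π →ₗ[A] N :=
    ((LinearMap.ker d).liftQ x'.hom hker).comp (d.quotKerEquivOfSurjective hd).symm.toLinearMap
  have hφ : ∀ w, φ (d w) = x'.hom w := by
    intro w
    have : (d.quotKerEquivOfSurjective hd).symm (d w) = Submodule.Quotient.mk w := by
      rw [LinearEquiv.symm_apply_eq]; rfl
    simp only [φ, LinearMap.comp_apply, LinearEquiv.coe_coe, this, Submodule.liftQ_apply]
  obtain ⟨ψ, hψ⟩ := H _ π hπ φ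
  refine ⟨(ModuleCat.ofHom ψ : P.complex.X 0 ⟶ N), ?_⟩
  change P.complex.d 1 0 ≫ ModuleCat.ofHom ψ = x'
  ext w
  exact (hψ (d w)).trans (hφ w)

def rho (k : Type) [Field k] (p q s : Fin 2 → k) :
    FreeAlgebra k (Fin 2) →ₐ[k] Matrix (Fin 2) (Fin 2) k :=
  FreeAlgebra.lift k (fun i => !![p i, s i; 0, q i])

lemma rho_entries (k : Type) [Field k] (p q s : Fin 2 → k) (a : FreeAlgebra k (Fin 2)) :
    rho k p q s a 0 0 = evalAt k p a ∧ rho k p q s a 1 0 = 0 ∧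
      rho k p q s a 1 1 = evalAt k q a := by
  induction a using FreeAlgebra.induction with
  | grade0 r => simp [Matrix.algebraMap_matrix_apply]
  | grade1 i => simp [rho, evalAt]
  | mul a b ha hb =>
    obtain ⟨h1, h2, h3⟩ := ha
    obtain ⟨h4, h5, h6⟩ := hb
    simp [Matrix.mul_apply, Fin.sum_univ_two, *]
  | add a b ha hb =>
    obtain ⟨h1, h2, h3⟩ := ha
    obtain ⟨h4, h5, h6⟩ := hb
    simp [*]

/-- The skew derivation attached to two points and a vector. -/
def dlt (k : Type) [Field k] (p q s : Fin 2 → k) : FreeAlgebra k (Fin 2) →ₗ[k] k where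
  toFun a := rho k p q s a 0 1
  map_add' a b := by simp
  map_smul' r a := by simp

lemma dlt_ι (k : Type) [Field k] (p q s : Fin 2 → k) (i : Fin 2) :
    dlt k p q s (FreeAlgebra.ι k i) = s i := by
  simp [dlt, rho]

lemma dlt_mul (k : Type) [Field k] (p q s : Fin 2 → k) (a b : FreeAlgebra k (Fin 2)) :
    dlt k p q s (a * b) = evalAt k p a * dlt k p q s b + dlt k p q s a * evalAt k q b := by
  obtain ⟨h1, h2, h3⟩ := rho_entries k p q s a
  obtain ⟨h4, h5, h6⟩ := rho_entries k p q s b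
  simp [dlt, Matrix.mul_apply, Fin.sum_univ_two, *]

lemma dlt_unique (k : Type) [Field k] (p q : Fin 2 → k) (D E : FreeAlgebra k (Fin 2) →ₗ[k] k)
    (hD : ∀ a b, D (a * b) = evalAt k p a * D b + D a * evalAt k q b)
    (hE : ∀ a b, E (a * b) = evalAt k p a * E b + E a * evalAt k q b)
    (h : ∀ i, D (FreeAlgebra.ι k i) = E (FreeAlgebra.ι k i)) (a : FreeAlgebra k (Fin 2)) :
    D a = E a := by
  have one : ∀ F : FreeAlgebra k (Fin 2) →ₗ[k] k,
      (∀ a b, F (a * b) = evalAt k p a * F b + F a * evalAt k q b) → F 1 = 0 := by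
    intro F hF
    have := hF 1 1
    simpa using this
  induction a using FreeAlgebra.induction with
  | grade0 r => rw [Algebra.algebraMap_eq_smul_one, map_smul, map_smul, one D hD, one E hE]
  | grade1 i => exact h i
  | mul a b ha hb => rw [hD, hE, ha, hb]
  | add a b ha hb => rw [map_add, map_add, ha, hb]

lemma dlt_inner (k : Type) [Field k] (p q : Fin 2 → k) (a : FreeAlgebra k (Fin 2)) :
    dlt k p q (p - q) a = evalAt k p a - evalAt k q a := by
  refine dlt_unique k p q (dlt k p q (p - q))
    ((evalAt k p).toLinearMap - (evalAt k q).toLinearMap) (dlt_mul k p q _) ?_ ?_ a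
  · intro a b
    simp; ring
  · intro i
    rw [dlt_ι]; simp [evalAt]

lemma dlt_lin (k : Type) [Field k] (p q s : Fin 2 → k) (a : FreeAlgebra k (Fin 2)) :
    dlt k p q s a = s 0 * dlt k p q ![1, 0] a + s 1 * dlt k p q ![0, 1] a := by
  refine dlt_unique k p q (dlt k p q s)
    (s 0 • dlt k p q ![1, 0] + s 1 • dlt k p q ![0, 1]) (dlt_mul k p q _) ?_ ?_ a
  · intro a b
    simp [dlt_mul]; ring
  · intro i
    fin_cases i <;> simp [dlt_ι]

lemma parallel_of (k : Type) [Field k] (s v e : Fin 2 → k) (α β : k)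
    (hs : s 0 * α + s 1 * β = 0) (hv : v 0 * α + v 1 * β = 0)
    (he : e 0 * α + e 1 * β ≠ 0) (hv0 : v ≠ 0) : ∃ l : k, ∀ i, s i = l * v i := by
  have h1 : (s 0 * v 1 - s 1 * v 0) * α = 0 := by linear_combination v 1 * hs - s 1 * hv
  have h2 : (s 0 * v 1 - s 1 * v 0) * β = 0 := by linear_combination -v 0 * hs + s 0 * hv
  have h3 : s 0 * v 1 - s 1 * v 0 = 0 := by
    by_contra hn
    rcases mul_eq_zero.1 h1 with h | h
    · exact hn h
    rcases mul_eq_zero.1 h2 with h' | h'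
    · exact hn h'
    exact he (by rw [h, h']; ring)
  by_cases hv1 : v 0 = 0
  · have hv2 : v 1 ≠ 0 := by
      intro h
      apply hv0
      funext i
      fin_cases i <;> simp [*]
    refine ⟨s 1 / v 1, fun i => ?_⟩
    fin_cases i
    · simp only [Fin.zero_eta, hv1, mul_zero]
      rw [hv1] at h3
      simpa [hv2] using h3
    · simp [hv2]
  · refine ⟨s 0 / v 0, fun i => ?_⟩
    fin_cases i
    · simp [hv1]
    · simp only [Fin.mk_one]
      field_simp
      linear_combination -h3

lemma extend_lemma (k : Type) [Field k] (A : Type) [Ring A] [Algebra k A]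
    (c : FreeAlgebra k (Fin 2) →ₐ[k] A) (hc : Function.Surjective c)
    (χ₁ χ₂ : A →ₐ[k] k) (p₁ p₂ : Fin 2 → k) (h1 : ∀ a, χ₁ (c a) = evalAt k p₁ a)
    (h2 : ∀ a, χ₂ (c a) = evalAt k p₂ a) (f : FreeAlgebra k (Fin 2)) (hf : c f = 0)
    (s0 : Fin 2 → k) (hs0 : dlt k p₂ p₁ s0 f ≠ 0) (hne : p₁ ≠ p₂)
    (P : Type) [AddCommGroup P] [Module A P] (K : Submodule A P) (π : P →+ k)
    (hsurj : Function.Surjective π) (hπ : ∀ a z, π (a • z) = χ₁ a * π z)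
    (hK : ∀ z, z ∈ K ↔ π z = 0) (φ : K →+ k) (hφ : ∀ a z, φ (a • z) = χ₂ a * φ z) :
    ∃ ψ : P →+ k, (∀ a z, ψ (a • z) = χ₂ a * ψ z) ∧ ∀ z : K, ψ z = φ z := by
  obtain ⟨m, hm⟩ := hsurj 1
  have hkk : ∀ r : k, χ₁ (algebraMap k A r) = r := fun r => by simp
  have hkk2 : ∀ r : k, χ₂ (algebraMap k A r) = r := fun r => by simp
  have hkφ : ∀ r z, r * φ z = φ (algebraMap k A r • z) := fun r z => by rw [hφ, hkk2]
  have memK : ∀ a : A, a • m - algebraMap k A (χ₁ a) • m ∈ K := by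
    intro a
    rw [hK, map_sub, hπ, hπ, hm, hkk]; ring
  let D0 : A → k := fun a => φ ⟨a • m - algebraMap k A (χ₁ a) • m, memK a⟩
  have D0add : ∀ a b, D0 (a + b) = D0 a + D0 b := by
    intro a b
    simp only [D0]
    rw [← map_add]
    congr 1
    ext
    simp only [map_add, add_smul, Submodule.coe_add]
    abel
  have D0mul : ∀ a b, D0 (a * b) = χ₂ a * D0 b + D0 a * χ₁ b := by
    intro a b
    simp only [D0]
    rw [mul_comm _ (χ₁ b), ← hφ a, hkφ, ← map_add]
    congr 1
    ext
    simp only [map_mul, Submodule.coe_add, Submodule.coe_smul, smul_sub, smul_smul, hkk2,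
      Algebra.commutes (χ₁ b) a, Algebra.commutes (χ₁ b) (algebraMap k A (χ₁ a))]
    abel
  have D0one : ∀ r, D0 (algebraMap k A r) = 0 := by
    intro r
    simp only [D0, hkk]
    rw [← map_zero φ]
    congr 1
    ext
    simp
  let D : FreeAlgebra k (Fin 2) →ₗ[k] k :=
    { toFun := fun a => D0 (c a)
      map_add' := fun a b => by rw [map_add, D0add]
      map_smul' := fun r a => by
        rw [Algebra.smul_def, map_mul, AlgHom.commutes, D0mul, D0one, hkk2]; simp }
  have hD : ∀ a b, D (a * b) = evalAt k p₂ a * D b + D a * evalAt k p₁ b := by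
    intro a b
    change D0 (c (a * b)) = evalAt k p₂ a * D0 (c b) + D0 (c a) * evalAt k p₁ b
    rw [map_mul, D0mul, h1, h2]
  let s : Fin 2 → k := fun i => D (FreeAlgebra.ι k i)
  have hDs : ∀ a, D a = dlt k p₂ p₁ s a :=
    dlt_unique k p₂ p₁ D _ hD (dlt_mul k _ _ _) (fun i => by rw [dlt_ι])
  have hDf : dlt k p₂ p₁ s f = 0 := by
    rw [← hDs]
    change D0 (c f) = 0
    rw [hf]
    simpa using D0one 0
  have hvf : dlt k p₂ p₁ (p₂ - p₁) f = 0 := by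
    rw [dlt_inner, ← h1, ← h2, hf]; simp
  rw [dlt_lin] at hDf hvf hs0
  obtain ⟨l, hl⟩ := parallel_of k s (p₂ - p₁) s0 _ _ hDf hvf hs0
    (sub_ne_zero.2 (Ne.symm hne))
  have hDl : ∀ a, D0 a = l * (χ₂ a - χ₁ a) := by
    intro a
    obtain ⟨a, rfl⟩ := hc a
    change D a = _
    have : s = fun i => l * (p₂ - p₁) i := funext hl
    rw [hDs, dlt_lin, hl, hl, h1, h2, ← dlt_inner, dlt_lin k p₂ p₁ (p₂ - p₁)]; ring
  have memK2 : ∀ z, z - algebraMap k A (π z) • m ∈ K := by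
    intro z
    rw [hK, map_sub, hπ, hm, hkk]; ring
  let ψ : P →+ k := AddMonoidHom.mk' (fun z => φ ⟨z - algebraMap k A (π z) • m, memK2 z⟩ + l * π z) (by
    intro y z
    have : (⟨y + z - algebraMap k A (π (y + z)) • m, memK2 (y + z)⟩ : K) =
        ⟨y - algebraMap k A (π y) • m, memK2 y⟩ + ⟨z - algebraMap k A (π z) • m, memK2 z⟩ := by
      ext
      simp only [map_add, add_smul, Submodule.coe_add]
      abel
    rw [this, map_add, map_add]; ring)
  refine ⟨ψ, ?_, ?_⟩
  · intro a z
    change φ _ + l * π (a • z) = χ₂ a * (φ _ + l * π z)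
    have : (⟨a • z - algebraMap k A (π (a • z)) • m, memK2 (a • z)⟩ : K) =
        a • ⟨z - algebraMap k A (π z) • m, memK2 z⟩ +
        algebraMap k A (π z) • ⟨a • m - algebraMap k A (χ₁ a) • m, memK a⟩ := by
      ext
      simp only [hπ, map_mul, Submodule.coe_add, Submodule.coe_smul, smul_sub, smul_smul,
        ← Algebra.commutes (π z) a, Algebra.commutes (π z) (algebraMap k A (χ₁ a))]
      abel
    rw [this, map_add, hφ, hφ, hkk2]
    have h3 := hDl a
    simp only [D0] at h3
    rw [h3, hπ]; ring
  · intro z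
    change φ _ + l * π z = φ z
    have hz := (hK z).1 z.2
    simp [hz]

lemma dlt_eq_zero_of_ext (k : Type) [Field k] (f : FreeAlgebra k (Fin 2)) (p₁ p₂ : Fin 2 → k)
    (hp₁ : MvPolynomial.eval p₁ (abel k f) = 0) (hp₂ : MvPolynomial.eval p₂ (abel k f) = 0)
    (hne : p₁ ≠ p₂)
    (hn : Nontrivial (Ext1 k (quotAlg k f) (pointMod k f p₁ hp₁) (pointMod k f p₂ hp₂)))
    (s : Fin 2 → k) : dlt k p₂ p₁ s f = 0 := by
  by_contra hs
  refine not_subsingleton_iff_nontrivial.2 hn (ext1_subsingleton k _ _ _ ?_)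
  intro P π hπ φ
  have hev : ∀ p hp a, pointHom k f p hp (RingQuot.mkAlgHom k _ a) = evalAt k p a := by
    intro p hp a
    simp [pointHom]
  obtain ⟨ψ, h1, h2⟩ := extend_lemma k (quotAlg k f) (RingQuot.mkAlgHom k _)
    (RingQuot.mkAlgHom_surjective k _) (pointHom k f p₁ hp₁) (pointHom k f p₂ hp₂) p₁ p₂
    (hev _ _) (hev _ _) f
    (by rw [RingQuot.mkAlgHom_rel k (s := fun a b : FreeAlgebra k (Fin 2) => a = f ∧ b = 0)
          ⟨rfl, rfl⟩, map_zero]) s hs hne P (LinearMap.ker π) π.toAddMonoidHom hπ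
    (fun a z => π.map_smul a z) (fun z => LinearMap.mem_ker) φ.toAddMonoidHom
    (fun a z => φ.map_smul a z)
  exact ⟨{ toFun := ψ, map_add' := ψ.map_add, map_smul' := h1 }, h2⟩

open scoped TensorProduct

lemma mem_span_of_vanish (k : Type) [Field k] [IsAlgClosed k] (g q : MvPolynomial (Fin 2) k)
    (hg : Squarefree g) (hq : ∀ p, MvPolynomial.eval p g = 0 → MvPolynomial.eval p q = 0) :
    q ∈ Ideal.span {g} := by
  have hr : (Ideal.span {g}).IsRadical := isRadical_iff_span_singleton.1 hg.isRadical
  rw [← hr.radical, ← MvPolynomial.vanishingIdeal_zeroLocus_eq_radical (K := k)]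
  intro p hp
  have h1 := hp g (Ideal.mem_span_singleton_self g)
  rw [MvPolynomial.aeval_eq_eval] at h1 ⊢
  exact hq p h1

/-- Evaluation of the second tensor factor. -/
def evR (k : Type) [Field k] (p : Fin 2 → k) :
    MvPolynomial (Fin 2) k ⊗[k] MvPolynomial (Fin 2) k →ₐ[k] MvPolynomial (Fin 2) k :=
  Algebra.TensorProduct.lift (AlgHom.id k _)
    ((Algebra.ofId k _).comp (MvPolynomial.aeval p)) (fun _ _ => Commute.all _ _)

lemma evR_tmul (k : Type) [Field k] (p : Fin 2 → k) (a b : MvPolynomial (Fin 2) k) :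
    evR k p (a ⊗ₜ b) = a * MvPolynomial.C (MvPolynomial.eval p b) := by
  simp [evR, MvPolynomial.aeval_eq_eval, Algebra.ofId_apply, MvPolynomial.algebraMap_eq]

lemma vanish_fill (k : Type) [Field k] [IsAlgClosed k] (g q : MvPolynomial (Fin 2) k)
    (hg : Squarefree g) (p₀ : Fin 2 → k)
    (hq : ∀ p, p ≠ p₀ → MvPolynomial.eval p g = 0 → MvPolynomial.eval p q = 0) :
    q ∈ Ideal.span {g} := by
  have key : ∀ i, g ∣ q * (MvPolynomial.X i - MvPolynomial.C (p₀ i)) := by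
    intro i
    rw [← Ideal.mem_span_singleton]
    apply mem_span_of_vanish k g _ hg
    intro p hp
    by_cases h : p = p₀
    · simp [h]
    · simp [hq p h hp]
  rw [Ideal.mem_span_singleton]
  have hirr : Irreducible (MvPolynomial.X 0 - MvPolynomial.C (p₀ 0) : MvPolynomial (Fin 2) k) := by
    have := MvPolynomial.irreducible_mul_X_add (R := k) (n := Fin 2) 1 (-MvPolynomial.C (p₀ 0)) 0
      one_ne_zero (by simp) (by rw [← map_neg]; simp) isRelPrime_one_left
    simpa [sub_eq_add_neg] using this
  obtain ⟨A, hA⟩ := key 0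
  obtain ⟨B, hB⟩ := key 1
  have hg0 : g ≠ 0 := hg.ne_zero
  have hAB : A * (MvPolynomial.X 1 - MvPolynomial.C (p₀ 1)) =
      (MvPolynomial.X 0 - MvPolynomial.C (p₀ 0)) * B := by
    apply mul_left_cancel₀ hg0
    linear_combination -(MvPolynomial.X 1 - MvPolynomial.C (p₀ 1)) * hA +
      (MvPolynomial.X 0 - MvPolynomial.C (p₀ 0)) * hB
  rcases hirr.prime.dvd_or_dvd (Dvd.intro _ hAB.symm) with ⟨A', hA'⟩ | ⟨C, hC⟩
  · refine ⟨A', mul_right_cancel₀ hirr.ne_zero ?_⟩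
    rw [hA, hA']; ring
  · have := congrArg (MvPolynomial.eval ![p₀ 0, p₀ 1 + 1]) hC
    simp at this

lemma tensor_zero_of (k A B ι : Type) [Field k] [AddCommGroup A] [Module k A] [AddCommGroup B]
    [Module k B] (b : Module.Basis ι k A) (T : A ⊗[k] B)
    (hT : ∀ i, TensorProduct.lid k B (LinearMap.rTensor B (b.coord i) T) = 0) : T = 0 := by
  classical
  apply (TensorProduct.equivFinsuppOfBasisLeft b).injective
  ext i
  simpa [TensorProduct.equivFinsuppOfBasisLeft_apply] using hT i

lemma tensor_vanish (k : Type) [Field k] [IsAlgClosed k] (g h : MvPolynomial (Fin 2) k)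
    (hh : Squarefree h)
    (P : MvPolynomial (Fin 2) k ⊗[k] MvPolynomial (Fin 2) k)
    (hP : ∀ p, MvPolynomial.eval p h = 0 → evR k p P ∈ Ideal.span {g}) :
    ∃ U V, P = U * (1 ⊗ₜ h) + (g ⊗ₜ 1) * V := by
  let qg := Ideal.Quotient.mkₐ k (Ideal.span {g})
  let qh := Ideal.Quotient.mkₐ k (Ideal.span {h})
  have hker := Algebra.TensorProduct.map_ker qg qh (Ideal.Quotient.mkₐ_surjective k _)
    (Ideal.Quotient.mkₐ_surjective k _)
  have hmem : P ∈ RingHom.ker (Algebra.TensorProduct.map qg qh) := by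
    rw [RingHom.mem_ker]
    let b := Module.Basis.ofVectorSpace k (MvPolynomial (Fin 2) k ⧸ Ideal.span {g})
    refine tensor_zero_of k _ _ _ b _ fun i => ?_
    let co : MvPolynomial (Fin 2) k ⊗[k] MvPolynomial (Fin 2) k →ₗ[k] MvPolynomial (Fin 2) k :=
      (TensorProduct.lid k _).toLinearMap ∘ₗ
        LinearMap.rTensor _ ((b.coord i) ∘ₗ qg.toLinearMap)
    have hco : ∀ Q, TensorProduct.lid k _ (LinearMap.rTensor _ (b.coord i)
        (Algebra.TensorProduct.map qg qh Q)) = qh (co Q) := by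
      intro Q
      induction Q using TensorProduct.induction_on with
      | zero => simp only [map_zero]
      | tmul x y =>
        simp only [co, Algebra.TensorProduct.map_tmul, LinearMap.comp_apply, LinearEquiv.coe_coe,
          LinearMap.rTensor_tmul, TensorProduct.lid_tmul, map_smul, AlgHom.toLinearMap_apply]
      | add x y hx hy => simp only [map_add, hx, hy]
    have hco2 : ∀ p Q, MvPolynomial.eval p (co Q) = b.coord i (qg (evR k p Q)) := by
      intro p Q
      induction Q using TensorProduct.induction_on with
      | zero => simp only [map_zero]
      | tmul x y =>
        rw [evR_tmul, mul_comm, ← MvPolynomial.smul_eq_C_mul, map_smul, map_smul]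
        simp only [co, LinearMap.comp_apply, LinearEquiv.coe_coe,
          LinearMap.rTensor_tmul, TensorProduct.lid_tmul, AlgHom.toLinearMap_apply,
          MvPolynomial.smul_eval, smul_eq_mul, mul_comm]
      | add x y hx hy => simp only [map_add, hx, hy]
    rw [hco]
    have : co P ∈ Ideal.span {h} := by
      apply mem_span_of_vanish k h _ hh
      intro p hp
      have hz : qg (evR k p P) = 0 := Ideal.Quotient.eq_zero_iff_mem.2 (hP p hp)
      rw [hco2, hz, map_zero]
    exact Ideal.Quotient.eq_zero_iff_mem.2 this
  rw [hker] at hmem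
  have kg : RingHom.ker qg = Ideal.span {g} := Ideal.Quotient.mkₐ_ker k _
  have kh : RingHom.ker qh = Ideal.span {h} := Ideal.Quotient.mkₐ_ker k _
  rw [kg, kh, Ideal.map_span, Ideal.map_span, Set.image_singleton, Set.image_singleton,
    Submodule.mem_sup] at hmem
  obtain ⟨y, hy, z, hz, rfl⟩ := hmem
  obtain ⟨V, rfl⟩ := Ideal.mem_span_singleton.1 hy
  obtain ⟨U, rfl⟩ := Ideal.mem_span_singleton.1 hz
  exact ⟨U, V, by simp only [Algebra.TensorProduct.includeLeft_apply, Algebra.TensorProduct.includeRight_apply]; ring⟩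

/-- The commutator of the two generators. -/
def cc (k : Type) [Field k] : FreeAlgebra k (Fin 2) :=
  FreeAlgebra.ι k 0 * FreeAlgebra.ι k 1 - FreeAlgebra.ι k 1 * FreeAlgebra.ι k 0

/-- The square of the commutator ideal. -/
def Q2 (k : Type) [Field k] : TwoSidedIdeal (FreeAlgebra k (Fin 2)) :=
  TwoSidedIdeal.span {x | ∃ s, x = cc k * s * cc k}

lemma comm_quot (k : Type) [Field k] (B : Type) [Ring B] [Algebra k B]
    (c : FreeAlgebra k (Fin 2) →ₐ[k] B) (hc : c (cc k) = 0) (a b : FreeAlgebra k (Fin 2)) :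
    c a * c b = c b * c a := by
  have h01 : c (FreeAlgebra.ι k 0) * c (FreeAlgebra.ι k 1) =
      c (FreeAlgebra.ι k 1) * c (FreeAlgebra.ι k 0) := by
    rw [cc, map_sub, map_mul, map_mul, sub_eq_zero] at hc
    exact hc
  have h1 : ∀ i j, c (FreeAlgebra.ι k i) * c (FreeAlgebra.ι k j) =
      c (FreeAlgebra.ι k j) * c (FreeAlgebra.ι k i) := by
    intro i j
    fin_cases i <;> fin_cases j
    · rfl
    · exact h01
    · exact h01.symm
    · rfl
  have h2 : ∀ i b, Commute (c (FreeAlgebra.ι k i)) (c b) := by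
    intro i b
    induction b using FreeAlgebra.induction with
    | grade0 r => rw [AlgHom.commutes]; exact Algebra.commute_algebraMap_right _ _
    | grade1 j => exact h1 i j
    | mul a b ha hb => rw [map_mul]; exact ha.mul_right hb
    | add a b ha hb => rw [map_add]; exact ha.add_right hb
  change Commute (c a) (c b)
  induction a using FreeAlgebra.induction with
  | grade0 r => rw [AlgHom.commutes]; exact Algebra.commute_algebraMap_left _ _
  | grade1 j => exact h2 j b
  | mul a b ha hb => rw [map_mul]; exact ha.mul_left hb
  | add a b ha hb => rw [map_add]; exact ha.add_left hb

lemma quot_zero (k : Type) [Field k] (B : Type) [Ring B] [Algebra k B]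
    (c : FreeAlgebra k (Fin 2) →ₐ[k] B) (hs : Function.Surjective c) (hc : c (cc k) = 0)
    (z : FreeAlgebra k (Fin 2)) (hz : abel k z = 0) : c z = 0 := by
  letI : CommRing B := { (inferInstance : Ring B) with
    mul_comm := fun x y => by
      obtain ⟨a, rfl⟩ := hs x
      obtain ⟨b, rfl⟩ := hs y
      exact comm_quot k B c hc a b }
  have h : (MvPolynomial.aeval (fun i => c (FreeAlgebra.ι k i))).comp (abel k) = c := by
    apply FreeAlgebra.hom_ext
    funext i
    simp [abel]
  rw [← h, AlgHom.comp_apply, hz, map_zero]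

lemma mem_J (k : Type) [Field k] (z : FreeAlgebra k (Fin 2)) (hz : abel k z = 0) :
    z ∈ TwoSidedIdeal.span {cc k} := by
  let J := TwoSidedIdeal.span {cc k}
  let c : FreeAlgebra k (Fin 2) →ₐ[k] J.ringCon.Quotient :=
    { J.ringCon.mk' with commutes' := fun r => rfl }
  have hmem : ∀ w, c w = 0 ↔ w ∈ J := by
    intro w
    rw [TwoSidedIdeal.mem_iff]
    exact RingCon.eq J.ringCon
  rw [← hmem]
  refine quot_zero k _ c (RingCon.mk'_surjective J.ringCon) ?_ z hz
  rw [hmem]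
  exact TwoSidedIdeal.subset_span rfl

lemma J_induction (k : Type) [Field k] (p : FreeAlgebra k (Fin 2) → Prop)
    (h0 : p 0) (hadd : ∀ a b, p a → p b → p (a + b)) (hneg : ∀ a, p a → p (-a))
    (hm : ∀ a b, p (a * cc k * b)) (z : FreeAlgebra k (Fin 2)) (hz : abel k z = 0) : p z := by
  have := mem_J k z hz
  rw [TwoSidedIdeal.mem_span_iff_mem_addSubgroup_closure] at this
  clear hz
  induction this using AddSubgroup.closure_induction with
  | mem x hx =>
    obtain ⟨w, ⟨a, -, y, rfl, rfl⟩, b, -, rfl⟩ := hx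
    exact hm a b
  | zero => exact h0
  | add x y _ _ hx hy => exact hadd _ _ hx hy
  | neg x _ hx => exact hneg _ hx

lemma abel_cc (k : Type) [Field k] : abel k (cc k) = 0 := by
  simp [cc, abel, mul_comm]

lemma gen_mem (k : Type) [Field k] (s : FreeAlgebra k (Fin 2)) : cc k * s * cc k ∈ Q2 k :=
  TwoSidedIdeal.subset_span ⟨s, rfl⟩

lemma J_mul_cc (k : Type) [Field k] (z : FreeAlgebra k (Fin 2)) (hz : abel k z = 0) :
    z * cc k ∈ Q2 k := by
  refine J_induction k (fun z => z * cc k ∈ Q2 k) ?_ ?_ ?_ ?_ z hz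
  · rw [zero_mul]; exact (Q2 k).zero_mem
  · intro a b ha hb; rw [add_mul]; exact (Q2 k).add_mem ha hb
  · intro a ha; rw [neg_mul]; exact (Q2 k).neg_mem ha
  · intro a b
    have := (Q2 k).mul_mem_left a _ (gen_mem k b)
    simpa only [mul_assoc] using this

lemma cc_mul_J (k : Type) [Field k] (z : FreeAlgebra k (Fin 2)) (hz : abel k z = 0) :
    cc k * z ∈ Q2 k := by
  refine J_induction k (fun z => cc k * z ∈ Q2 k) ?_ ?_ ?_ ?_ z hz
  · rw [mul_zero]; exact (Q2 k).zero_mem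
  · intro a b ha hb; rw [mul_add]; exact (Q2 k).add_mem ha hb
  · intro a ha; rw [mul_neg]; exact (Q2 k).neg_mem ha
  · intro a b
    have := (Q2 k).mul_mem_right _ b (gen_mem k a)
    simpa only [mul_assoc] using this

lemma J_mul_J (k : Type) [Field k] (y z : FreeAlgebra k (Fin 2)) (hy : abel k y = 0)
    (hz : abel k z = 0) : y * z ∈ Q2 k := by
  refine J_induction k (fun z => y * z ∈ Q2 k) ?_ ?_ ?_ ?_ z hz
  · rw [mul_zero]; exact (Q2 k).zero_mem
  · intro a b ha hb; rw [mul_add]; exact (Q2 k).add_mem ha hb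
  · intro a ha; rw [mul_neg]; exact (Q2 k).neg_mem ha
  · intro a b
    have := (Q2 k).mul_mem_right _ b (J_mul_cc k (y * a) (by rw [map_mul, hy, zero_mul]))
    simpa only [mul_assoc] using this

/-- The class of `a c b` modulo the square only depends on the abelianizations. -/
lemma sandwich (k : Type) [Field k] (a a' b b' : FreeAlgebra k (Fin 2))
    (ha : abel k a = abel k a') (hb : abel k b = abel k b') :
    a * cc k * b - a' * cc k * b' ∈ Q2 k := by
  have h1 := (Q2 k).mul_mem_right _ b (J_mul_cc k (a - a') (by rw [map_sub, ha, sub_self]))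
  have h2 := (Q2 k).mul_mem_left a' _ (cc_mul_J k (b - b') (by rw [map_sub, hb, sub_self]))
  have := (Q2 k).add_mem h1 h2
  have e : (a - a') * cc k * b + a' * (cc k * (b - b')) = a * cc k * b - a' * cc k * b' := by
    noncomm_ring
  rwa [e] at this

lemma abel_surj (k : Type) [Field k] : Function.Surjective (abel k) := by
  intro p
  induction p using MvPolynomial.induction_on with
  | C a => exact ⟨algebraMap _ _ a, by rw [AlgHom.commutes]; rfl⟩
  | add p q hp hq =>
    obtain ⟨a, rfl⟩ := hp
    obtain ⟨b, rfl⟩ := hq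
    exact ⟨a + b, map_add _ _ _⟩
  | mul_X p i hp =>
    obtain ⟨a, rfl⟩ := hp
    exact ⟨a * FreeAlgebra.ι k i, by simp [abel]⟩

/-- The map `a ⊗ b ↦ σ a * [x,y] * σ b`. -/
def Th (k : Type) [Field k] (σ : MvPolynomial (Fin 2) k →ₗ[k] FreeAlgebra k (Fin 2)) :
    MvPolynomial (Fin 2) k ⊗[k] MvPolynomial (Fin 2) k →ₗ[k] FreeAlgebra k (Fin 2) :=
  TensorProduct.lift (LinearMap.mk₂ k (fun a b => σ a * cc k * σ b)
    (by intros; simp [add_mul]) (by intros; simp)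
    (by intros; simp [mul_add]) (by intros; simp))

lemma Th_tmul (k : Type) [Field k] (σ : MvPolynomial (Fin 2) k →ₗ[k] FreeAlgebra k (Fin 2))
    (a b : MvPolynomial (Fin 2) k) : Th k σ (a ⊗ₜ b) = σ a * cc k * σ b := by
  simp [Th]

lemma abel_Th (k : Type) [Field k] (σ : MvPolynomial (Fin 2) k →ₗ[k] FreeAlgebra k (Fin 2))
    (P : MvPolynomial (Fin 2) k ⊗[k] MvPolynomial (Fin 2) k) : abel k (Th k σ P) = 0 := by
  induction P using TensorProduct.induction_on with
  | zero => simp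
  | tmul a b => simp [Th_tmul, abel_cc]
  | add x y hx hy => rw [map_add, map_add, hx, hy, add_zero]

lemma dlt_Th (k : Type) [Field k] (σ : MvPolynomial (Fin 2) k →ₗ[k] FreeAlgebra k (Fin 2))
    (hσ : ∀ a, abel k (σ a) = a) (p q s : Fin 2 → k)
    (P : MvPolynomial (Fin 2) k ⊗[k] MvPolynomial (Fin 2) k) :
    dlt k p q s (Th k σ P) = MvPolynomial.eval p (evR k q P) * dlt k p q s (cc k) := by
  induction P using TensorProduct.induction_on with
  | zero => simp
  | tmul a b =>
    have hc : ∀ p, evalAt k p (cc k) = 0 := fun p => by rw [← eval_abel, abel_cc, map_zero]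
    rw [Th_tmul, dlt_mul, dlt_mul, evR_tmul, map_mul, hc, hc, ← eval_abel, ← eval_abel, hσ, hσ]
    simp; ring
  | add x y hx hy => rw [map_add, map_add, hx, hy, map_add, map_add, add_mul]

lemma exists_Th (k : Type) [Field k] (σ : MvPolynomial (Fin 2) k →ₗ[k] FreeAlgebra k (Fin 2))
    (hσ : ∀ a, abel k (σ a) = a) (z : FreeAlgebra k (Fin 2)) (hz : abel k z = 0) :
    ∃ P, z - Th k σ P ∈ Q2 k := by
  refine J_induction k (fun z => ∃ P, z - Th k σ P ∈ Q2 k) ?_ ?_ ?_ ?_ z hz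
  · exact ⟨0, by simpa using (Q2 k).zero_mem⟩
  · rintro a b ⟨P, hP⟩ ⟨R, hR⟩
    refine ⟨P + R, ?_⟩
    rw [map_add, add_sub_add_comm]
    exact (Q2 k).add_mem hP hR
  · rintro a ⟨P, hP⟩
    refine ⟨-P, ?_⟩
    have := (Q2 k).neg_mem hP
    rwa [neg_sub', ← map_neg] at this
  · intro a b
    refine ⟨abel k a ⊗ₜ abel k b, ?_⟩
    rw [Th_tmul]
    exact sandwich k _ _ _ _ (hσ _).symm (hσ _).symm

lemma Th_right (k : Type) [Field k] (σ : MvPolynomial (Fin 2) k →ₗ[k] FreeAlgebra k (Fin 2))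
    (hσ : ∀ a, abel k (σ a) = a) (h : MvPolynomial (Fin 2) k)
    (U : MvPolynomial (Fin 2) k ⊗[k] MvPolynomial (Fin 2) k) :
    Th k σ (U * (1 ⊗ₜ h)) - Th k σ U * σ h ∈ Q2 k := by
  induction U using TensorProduct.induction_on with
  | zero => simpa using (Q2 k).zero_mem
  | tmul a b =>
    rw [Algebra.TensorProduct.tmul_mul_tmul, mul_one, Th_tmul, Th_tmul, mul_assoc _ (σ b)]
    exact sandwich k _ _ _ _ rfl (by rw [hσ, map_mul, hσ, hσ])
  | add x y hx hy =>
    rw [add_mul, map_add, map_add, add_mul, add_sub_add_comm]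
    exact (Q2 k).add_mem hx hy

lemma Th_left (k : Type) [Field k] (σ : MvPolynomial (Fin 2) k →ₗ[k] FreeAlgebra k (Fin 2))
    (hσ : ∀ a, abel k (σ a) = a) (g : MvPolynomial (Fin 2) k)
    (V : MvPolynomial (Fin 2) k ⊗[k] MvPolynomial (Fin 2) k) :
    Th k σ ((g ⊗ₜ 1) * V) - σ g * Th k σ V ∈ Q2 k := by
  induction V using TensorProduct.induction_on with
  | zero => simpa using (Q2 k).zero_mem
  | tmul a b =>
    rw [Algebra.TensorProduct.tmul_mul_tmul, one_mul, Th_tmul, Th_tmul, ← mul_assoc, ← mul_assoc]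
    exact sandwich k _ _ _ _ (by rw [hσ, map_mul, hσ, hσ]) rfl
  | add x y hx hy =>
    rw [mul_add, map_add, map_add, mul_add, add_sub_add_comm]
    exact (Q2 k).add_mem hx hy

lemma dlt_Q2 (k : Type) [Field k] (p q s : Fin 2 → k) (z : FreeAlgebra k (Fin 2))
    (hz : z ∈ Q2 k) : dlt k p q s z = 0 := by
  have hc : ∀ p, evalAt k p (cc k) = 0 := fun p => by rw [← eval_abel, abel_cc, map_zero]
  rw [Q2, TwoSidedIdeal.mem_span_iff_mem_addSubgroup_closure] at hz
  induction hz using AddSubgroup.closure_induction with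
  | mem x hx =>
    obtain ⟨w, ⟨a, -, y, ⟨t, rfl⟩, rfl⟩, b, -, rfl⟩ := hx
    simp [dlt_mul, hc]
  | zero => simp
  | add x y _ _ hx hy => rw [map_add, hx, hy, add_zero]
  | neg x _ hx => rw [map_neg, hx, neg_zero]

lemma exists_s (k : Type) [Field k] (p q : Fin 2 → k) (hne : p ≠ q) :
    ∃ s, dlt k p q s (cc k) ≠ 0 := by
  have hf : ∀ s, dlt k p q s (cc k) = s 1 * (p 0 - q 0) + s 0 * (q 1 - p 1) := by
    intro s
    simp [cc, dlt_mul, dlt_ι, evalAt]; ring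
  by_contra! hcon
  apply hne
  have h0 := hcon ![1, 0]
  have h1 := hcon ![0, 1]
  rw [hf] at h0 h1
  simp at h0 h1
  funext i
  fin_cases i
  · exact sub_eq_zero.1 h1
  · exact (sub_eq_zero.1 h0).symm

/-- if the abelianization `f₀ = g·h` of `f` is reduced with a proper
factorisation, and `Ext¹_A(k(p₁), k(p₂)) ≠ 0` for all `p₁ ∈ C_h` and `p₂ ∈ C_g` where
`A = k⟨x,y⟩/(f)`, then the factorisation lifts to noncommutative models modulo the square
of the commutator ideal `J = ([x,y])`. -/
theorem factorisation_lifts_modulo_commutator_squared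
    (k : Type) [Field k] [IsAlgClosed k] [CharZero k]
    (f : FreeAlgebra k (Fin 2)) (g h : MvPolynomial (Fin 2) k)
    (hred : Squarefree (abel k f))
    (hgnc : 0 < g.totalDegree) (hhnc : 0 < h.totalDegree)
    (hfact : abel k f = g * h)
    (hext : ∀ p₁ p₂ : Fin 2 → k,
      (hp₁ : MvPolynomial.eval p₁ h = 0) → (hp₂ : MvPolynomial.eval p₂ g = 0) →
      Nontrivial (Ext1 k (quotAlg k f)
        (pointMod k f p₁ (by rw [hfact, map_mul, hp₁, mul_zero]))
        (pointMod k f p₂ (by rw [hfact, map_mul, hp₂, zero_mul]))))  :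
    ∃ ghat hhat : FreeAlgebra k (Fin 2),
      abel k ghat = g ∧ abel k hhat = h ∧
      f - ghat * hhat ∈ TwoSidedIdeal.span {x : FreeAlgebra k (Fin 2) |
        ∃ s : FreeAlgebra k (Fin 2),
          x = (FreeAlgebra.ι k 0 * FreeAlgebra.ι k 1 - FreeAlgebra.ι k 1 * FreeAlgebra.ι k 0)
            * s *
            (FreeAlgebra.ι k 0 * FreeAlgebra.ι k 1 - FreeAlgebra.ι k 1 * FreeAlgebra.ι k 0)} := by


  obtain ⟨σ, hσ'⟩ := (abel k).toLinearMap.exists_rightInverse_of_surjective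
    (LinearMap.range_eq_top.2 (abel_surj k))
  have hσ : ∀ a, abel k (σ a) = a := fun a => LinearMap.congr_fun hσ' a
  have hg : Squarefree g := hred.squarefree_of_dvd ⟨h, hfact⟩
  have hh : Squarefree h := hred.squarefree_of_dvd ⟨g, by rw [hfact, mul_comm]⟩
  obtain ⟨P, hP⟩ := exists_Th k σ hσ (f - σ g * σ h)
    (by rw [map_sub, map_mul, hσ, hσ, hfact, sub_self])
  have hvan : ∀ p₁ p₂, p₁ ≠ p₂ → MvPolynomial.eval p₁ h = 0 → MvPolynomial.eval p₂ g = 0 →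
      MvPolynomial.eval p₂ (evR k p₁ P) = 0 := by
    intro p₁ p₂ hne hp₁ hp₂
    obtain ⟨s, hs⟩ := exists_s k p₂ p₁ hne.symm
    have h1 := dlt_Q2 k p₂ p₁ s _ hP
    rw [map_sub, map_sub, dlt_Th k σ hσ, dlt_mul, ← eval_abel, ← eval_abel, hσ, hσ, hp₁, hp₂,
      dlt_eq_zero_of_ext k f p₁ p₂ _ _ hne (hext p₁ p₂ hp₁ hp₂)] at h1
    simpa [hs] using h1
  obtain ⟨U, V, hUV⟩ := tensor_vanish k g h hh P (fun p hp =>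
    vanish_fill k g _ hg p (fun p' hne hp' => hvan p p' hne.symm hp hp'))
  refine ⟨σ g + Th k σ U, σ h + Th k σ V, ?_, ?_, ?_⟩
  · rw [map_add, abel_Th, hσ, add_zero]
  · rw [map_add, abel_Th, hσ, add_zero]
  · change _ ∈ Q2 k
    have h1 := Th_right k σ hσ h U
    have h2 := Th_left k σ hσ g V
    have h3 := J_mul_J k _ _ (abel_Th k σ U) (abel_Th k σ V)
    have h4 := (Q2 k).sub_mem ((Q2 k).add_mem hP ((Q2 k).add_mem h1 h2)) h3
    rw [hUV, map_add] at h4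
    convert h4 using 1
    noncomm_ring

end
end

section
/- Let k be a field of characteristic zero and δ ∈ k with δ ≠ 0. Then there do not exist matrices X, Y ∈ M₂(k) such that X² + Y² − I + δ(XY − YX) = 0 and X, Y generate M₂(k) as a k-algebra. Equivalently, the noncommutative quadric A_δ = k⟨x,y⟩/(x² + y² − 1 + δ[x,y]) has no 2-dimensional simple module when δ ≠ 0. -/
lemma quad_sq {k : Type} [Field k] (X : Matrix (Fin 2) (Fin 2) k) :
    X * X = X.trace • X - X.det • (1 : Matrix (Fin 2) (Fin 2) k) := by
  ext i j
  fin_cases i <;> fin_cases j <;>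
    simp [Matrix.mul_apply, Fin.sum_univ_two, Matrix.trace_fin_two, Matrix.det_fin_two] <;> ring

lemma quad_polar {k : Type} [Field k] (X Y : Matrix (Fin 2) (Fin 2) k) :
    X * Y + Y * X = X.trace • Y + Y.trace • X
      + ((X * Y).trace - X.trace * Y.trace) • (1 : Matrix (Fin 2) (Fin 2) k) := by
  ext i j
  fin_cases i <;> fin_cases j <;>
    simp [Matrix.mul_apply, Fin.sum_univ_two, Matrix.trace_fin_two] <;> ring

/-- the noncommutative quadric `x² + y² − 1 + δ[x,y]` with `δ ≠ 0` has no
2-dimensional simple module: there is no pair of 2×2 matrices satisfying the relation and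
generating the full matrix algebra. -/
theorem no_two_dimensional_simple_module_of_smooth_quadric
    (k : Type) [Field k] [CharZero k] (δ : k) (hδ : δ ≠ 0) :
    ¬ ∃ X Y : Matrix (Fin 2) (Fin 2) k,
        X ^ 2 + Y ^ 2 - 1 + δ • (X * Y - Y * X) = 0 ∧
        Algebra.adjoin k ({X, Y} : Set (Matrix (Fin 2) (Fin 2) k)) = ⊤ := by
  classical
  rintro ⟨X, Y, h, hgen⟩
  let S : Finset (Matrix (Fin 2) (Fin 2) k) := {1, X, Y}
  let V : Submodule k (Matrix (Fin 2) (Fin 2) k) := Submodule.span k (S : Set _)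
  have h1 : (1 : Matrix (Fin 2) (Fin 2) k) ∈ V := Submodule.subset_span (by simp [S])
  have hX : X ∈ V := Submodule.subset_span (by simp [S])
  have hY : Y ∈ V := Submodule.subset_span (by simp [S])
  have hXX : X * X ∈ V := by
    rw [quad_sq]
    exact V.sub_mem (V.smul_mem _ hX) (V.smul_mem _ h1)
  have hYY : Y * Y ∈ V := by
    rw [quad_sq]
    exact V.sub_mem (V.smul_mem _ hY) (V.smul_mem _ h1)
  have hP : X * Y + Y * X ∈ V := by
    rw [quad_polar]
    exact V.add_mem (V.add_mem (V.smul_mem _ hY) (V.smul_mem _ hX)) (V.smul_mem _ h1)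
  have hC : X * Y - Y * X ∈ V := by
    rw [← V.smul_mem_iff hδ]
    have : δ • (X * Y - Y * X) = 1 - X * X - Y * Y := by
      rw [pow_two, pow_two] at h
      rw [← sub_eq_zero, ← h]; abel
    rw [this]
    exact V.sub_mem (V.sub_mem h1 hXX) hYY
  have h2 : (2 : k) ≠ 0 := two_ne_zero
  have hXY : X * Y ∈ V := by
    rw [← V.smul_mem_iff h2]
    convert V.add_mem hP hC using 1
    rw [two_smul]; abel
  have hYX : Y * X ∈ V := by
    rw [← V.smul_mem_iff h2]
    convert V.sub_mem hP hC using 1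
    rw [two_smul]; abel
  have hmul : ∀ a b, a ∈ V → b ∈ V → a * b ∈ V := by
    intro a b ha hb
    have hVV : V * V ≤ V := by
      change Submodule.span k _ * Submodule.span k _ ≤ V
      rw [Submodule.span_mul_span, Submodule.span_le]
      rintro _ ⟨u, hu, v, hv, rfl⟩
      simp only [S, Finset.coe_insert, Finset.coe_singleton, Set.mem_insert_iff,
        Set.mem_singleton_iff] at hu hv
      rcases hu with rfl | rfl | rfl <;> rcases hv with rfl | rfl | rfl <;>
        simpa using (by assumption)
    exact hVV (Submodule.mul_mem_mul ha hb)
  have hle : Algebra.adjoin k ({X, Y} : Set (Matrix (Fin 2) (Fin 2) k))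
      ≤ V.toSubalgebra h1 hmul := by
    apply Algebra.adjoin_le
    rintro z (rfl | rfl)
    · exact hX
    · exact hY
  have htop : V = ⊤ := by
    rw [eq_top_iff]
    intro z _
    rw [hgen] at hle
    exact hle (Algebra.mem_top (x := z))
  have hfr : Module.finrank k V ≤ S.card := finrank_span_finset_le_card S
  have hS : S.card ≤ 3 := Finset.card_le_three
  rw [htop, finrank_top, Module.finrank_matrix] at hfr
  simp at hfr
  omega
end

section
/- Let k be a field, m ≥ 1, S = k⟨x₁,…,x_m⟩ the free associative k-algebra, and a = (a₁,…,a_m) ∈ k^m, with ε_a : S → k the k-algebra homomorphism sending x_i ↦ a_i. For every f ∈ S with ε_a(f) = 0 there exists a unique m-tuple (f₁,…,f_m) of elements of S such that f = ∑_{i=1}^m f_i·(x_i − a_i). -/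
/-- The representation `f ↦ [[f, D f], [0, ε f]]`, `D` being the `i`-th left derivative at `a`. -/
noncomputable def leftRep (k : Type) [Field k] (m : ℕ) (a : Fin m → k) (i : Fin m) :
    FreeAlgebra k (Fin m) →ₐ[k] Matrix (Fin 2) (Fin 2) (FreeAlgebra k (Fin m)) :=
  FreeAlgebra.lift k (fun j => !![FreeAlgebra.ι k j, if j = i then 1 else 0;
    0, algebraMap k (FreeAlgebra k (Fin m)) (a j)])

theorem leftRep_diag (k : Type) [Field k] (m : ℕ) (a : Fin m → k) (i : Fin m)
    (f : FreeAlgebra k (Fin m)) : leftRep k m a i f 0 0 = f := by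
  suffices h : leftRep k m a i f 0 0 = f ∧ leftRep k m a i f 1 0 = 0 from h.1
  induction f using FreeAlgebra.induction with
  | grade0 r => simp [Matrix.algebraMap_matrix_apply]
  | grade1 x => simp [leftRep]
  | mul x y hx hy => simp [Matrix.mul_apply, Fin.sum_univ_two, hx, hy]
  | add x y hx hy => simp [hx, hy]

theorem leftRep_apply (k : Type) [Field k] (m : ℕ) (a : Fin m → k) (i j : Fin m)
    (f : FreeAlgebra k (Fin m)) :
    leftRep k m a i (f * (FreeAlgebra.ι k j - algebraMap k (FreeAlgebra k (Fin m)) (a j))) 0 1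
      = if j = i then f else 0 := by
  rw [map_mul, Matrix.mul_apply, Fin.sum_univ_two, leftRep_diag, map_sub, AlgHom.commutes]
  simp [leftRep, Matrix.algebraMap_matrix_apply]

theorem left_decomp_exists (k : Type) [Field k] (m : ℕ) (a : Fin m → k)
    (f : FreeAlgebra k (Fin m)) :
    ∃ g : Fin m → FreeAlgebra k (Fin m),
      f - algebraMap k (FreeAlgebra k (Fin m)) (FreeAlgebra.lift k a f) = ∑ i : Fin m,
        g i * (FreeAlgebra.ι k i - algebraMap k (FreeAlgebra k (Fin m)) (a i)) := by
  induction f using FreeAlgebra.induction with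
  | grade0 r => exact ⟨0, by simp⟩
  | grade1 x => exact ⟨Pi.single x 1, by simp [Pi.single_apply]⟩
  | mul x y hx hy =>
    obtain ⟨g, hg⟩ := hx
    obtain ⟨h, hh⟩ := hy
    refine ⟨fun i => x * h i +
      algebraMap k (FreeAlgebra k (Fin m)) (FreeAlgebra.lift k a y) * g i, ?_⟩
    simp only [add_mul, Finset.sum_add_distrib, mul_assoc]
    rw [← Finset.mul_sum, ← Finset.mul_sum, ← hg, ← hh, map_mul, map_mul, mul_sub, mul_sub,
      ← Algebra.commutes (FreeAlgebra.lift k a y) x,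
      ← Algebra.commutes (FreeAlgebra.lift k a y)
        (algebraMap k (FreeAlgebra k (Fin m)) (FreeAlgebra.lift k a x))]
    abel
  | add x y hx hy =>
    obtain ⟨g, hg⟩ := hx
    obtain ⟨h, hh⟩ := hy
    refine ⟨g + h, ?_⟩
    simp only [Pi.add_apply, add_mul, Finset.sum_add_distrib, ← hg, ← hh, map_add]
    abel

/-- unique left decomposition in the free algebra. If `f` vanishes under the
evaluation homomorphism at `a ∈ kᵐ`, then `f = ∑ fᵢ · (xᵢ − aᵢ)` for a unique `m`-tuple
`(f₁, …, f_m)`. -/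
theorem unique_left_decomposition
    (k : Type) [Field k] (m : ℕ) (hm : 1 ≤ m) (a : Fin m → k)
    (f : FreeAlgebra k (Fin m)) (hf : FreeAlgebra.lift k a f = 0) :
    ∃! g : Fin m → FreeAlgebra k (Fin m),
      f = ∑ i : Fin m,
        g i * (FreeAlgebra.ι k i - algebraMap k (FreeAlgebra k (Fin m)) (a i)) := by
  have key : ∀ g : Fin m → FreeAlgebra k (Fin m), f = ∑ i : Fin m,
        g i * (FreeAlgebra.ι k i - algebraMap k (FreeAlgebra k (Fin m)) (a i)) →
      ∀ i, g i = leftRep k m a i f 0 1 := by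
    intro g hg i
    rw [hg, map_sum, Matrix.sum_apply]
    simp only [leftRep_apply]
    simp
  obtain ⟨g, hg⟩ := left_decomp_exists k m a f
  rw [hf, map_zero, sub_zero] at hg
  exact ⟨g, hg, fun h hh => funext fun i => (key h hh i).trans (key g hg i).symm⟩
end

section
/- Let k be a field, A an associative k-algebra, and let 0 → M → E → N → 0 be a non-split short exact sequence of left A-modules of finite length with Supp(M) ∩ Supp(N) = ∅. If End_A(M) = k·id_M and End_A(N) = k·id_N, then End_A(E) = k·id_E. -/
/-- `V` is (isomorphic to) a subquotient of `M`; for modules of finite length and `V` simple,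
this says exactly that `V` is a composition factor of `M` (Jordan–Hölder). -/
def IsSubquotient (A : Type) [Ring A] (V M : Type) [AddCommGroup V] [Module A V]
    [AddCommGroup M] [Module A M] : Prop :=
  ∃ (q : Submodule A M) (p : Submodule A ↥q), Nonempty ((↥q ⧸ p) ≃ₗ[A] V)

theorem hom_zero_of_disj (A : Type) [Ring A] (X Y : Type) [AddCommGroup X] [Module A X]
    [AddCommGroup Y] [Module A Y] (hY : IsFiniteLength A Y)
    (h : ∀ (V : Type) [AddCommGroup V] [Module A V], IsSimpleModule A V →
      IsSubquotient A V X → IsSubquotient A V Y → False) (f : X →ₗ[A] Y) : f = 0 := by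
  by_contra hf
  have hr : LinearMap.range f ≠ ⊥ := fun h => hf (LinearMap.range_eq_bot.mp h)
  obtain ⟨_, _⟩ := isFiniteLength_iff_isNoetherian_isArtinian.mp hY
  obtain ⟨S, hS, hle⟩ := (IsAtomic.eq_bot_or_exists_atom_le (LinearMap.range f)).resolve_left hr
  let g : (S.comap f) →ₗ[A] S := f.restrict (fun x hx => hx)
  have hg : Function.Surjective g := by
    rintro ⟨y, hy⟩
    obtain ⟨x, rfl⟩ := hle hy
    exact ⟨⟨x, hy⟩, rfl⟩
  exact h S (isSimpleModule_iff_isAtom.mpr hS)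
    ⟨S.comap f, LinearMap.ker g, ⟨g.quotKerEquivOfSurjective hg⟩⟩
    ⟨S, ⊥, ⟨Submodule.quotEquivOfEqBot _ rfl⟩⟩

theorem factor_through_surj {A : Type} [Ring A] {E N X : Type} [AddCommGroup E] [Module A E]
    [AddCommGroup N] [Module A N] [AddCommGroup X] [Module A X] (π : E →ₗ[A] N)
    (hπ : Function.Surjective π) (g : E →ₗ[A] X) (h : ∀ x, π x = 0 → g x = 0) :
    ∃ t : N →ₗ[A] X, ∀ x, t (π x) = g x := by
  refine ⟨((LinearMap.ker π).liftQ g (fun x hx => h x hx)).comp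
    (π.quotKerEquivOfSurjective hπ).symm.toLinearMap, fun x => ?_⟩
  have : (π.quotKerEquivOfSurjective hπ).symm (π x) = Submodule.Quotient.mk x := by
    rw [LinearEquiv.symm_apply_eq]; rfl
  simp only [LinearMap.comp_apply, LinearEquiv.coe_coe, this]
  rfl

theorem factor_through_inj {A : Type} [Ring A] {E M X : Type} [AddCommGroup E] [Module A E]
    [AddCommGroup M] [Module A M] [AddCommGroup X] [Module A X] (ι : M →ₗ[A] E)
    (hι : Function.Injective ι) (g : X →ₗ[A] E) (h : ∀ x, g x ∈ LinearMap.range ι) :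
    ∃ t : X →ₗ[A] M, ∀ x, ι (t x) = g x := by
  refine ⟨(LinearEquiv.ofInjective ι hι).symm.toLinearMap.comp (g.codRestrict _ h), fun x => ?_⟩
  have := (LinearEquiv.ofInjective ι hι).apply_symm_apply (g.codRestrict _ h x)
  exact congrArg Subtype.val this

/-- for a non-split extension `0 → M → E → N → 0` of finite-length modules
with disjoint supports, if all endomorphisms of `M` and of `N` are scalars, then all
endomorphisms of `E` are scalars. -/
theorem end_eq_scalars_of_nonsplit_extension (k : Type) [Field k]
    (A : Type) [Ring A] [Algebra k A]
    (M E N : Type) [AddCommGroup M] [Module A M] [AddCommGroup E] [Module A E]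
    [AddCommGroup N] [Module A N]
    (hM : IsFiniteLength A M) (hN : IsFiniteLength A N)
    (ι : M →ₗ[A] E) (π : E →ₗ[A] N)
    (hι : Function.Injective ι) (hπ : Function.Surjective π)
    (hexact : LinearMap.range ι = LinearMap.ker π)
    (hnonsplit : ¬ ∃ s : N →ₗ[A] E, π.comp s = LinearMap.id)
    (hdisj : ∀ (V : Type) [AddCommGroup V] [Module A V], IsSimpleModule A V →
      IsSubquotient A V M → IsSubquotient A V N → False)
    (hEndM : ∀ φ : M →ₗ[A] M, ∃ c : k, ∀ x : M, φ x = algebraMap k A c • x)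
    (hEndN : ∀ φ : N →ₗ[A] N, ∃ c : k, ∀ x : N, φ x = algebraMap k A c • x) :
    ∀ φ : E →ₗ[A] E, ∃ c : k, ∀ x : E, φ x = algebraMap k A c • x := by
  intro φ
  have hMN := hom_zero_of_disj A M N hN hdisj
  have hNM := hom_zero_of_disj A N M hM (fun V _ _ hV h1 h2 => hdisj V hV h2 h1)
  have hπι : ∀ m, π (ι m) = 0 := fun m => by
    have : ι m ∈ LinearMap.ker π := hexact ▸ LinearMap.mem_range_self ι m
    exact this
  have hk : ∀ x, π x = 0 → x ∈ LinearMap.range ι := fun x hx => by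
    rw [hexact]; exact hx
  -- multiplication by a scalar as an `A`-linear map
  let sc : k → E →ₗ[A] E := fun c =>
    { toFun := fun x => algebraMap k A c • x
      map_add' := fun x y => smul_add _ x y
      map_smul' := fun a x => by
        simp only [RingHom.id_apply, ← mul_smul, Algebra.commutes] }
  have hsc : ∀ c x, sc c x = algebraMap k A c • x := fun _ _ => rfl
  have hφ : ∀ m, π (φ (ι m)) = 0 := fun m =>
    LinearMap.congr_fun (hMN ((π.comp φ).comp ι)) m
  obtain ⟨α, hα⟩ := factor_through_inj ι hι (φ.comp ι) (fun m => hk _ (hφ m))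
  obtain ⟨β, hβ⟩ := factor_through_surj π hπ (π.comp φ) (fun x hx => by
    obtain ⟨m, rfl⟩ := hk x hx
    exact hφ m)
  obtain ⟨a, ha⟩ := hEndM α
  obtain ⟨b, hb⟩ := hEndN β
  have hφa : ∀ m, φ (ι m) = algebraMap k A a • ι m := fun m => by
    have := hα m
    rw [ha, map_smul] at this
    exact this.symm
  have hφb : ∀ x, π (φ x) = algebraMap k A b • π x := fun x => by
    have := hβ x
    rw [hb] at this
    exact this.symm
  by_cases hab : a = b
  · subst hab
    refine ⟨a, fun x => ?_⟩
    obtain ⟨γ, hγ⟩ := factor_through_inj ι hι (φ - sc a) (fun x => hk _ (by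
      simp [hsc, hφb]))
    obtain ⟨δ, hδ⟩ := factor_through_surj π hπ γ (fun x hx => by
      obtain ⟨m, rfl⟩ := hk x hx
      apply hι
      rw [hγ]
      simp [hsc, hφa])
    have h1 := hγ x
    rw [← hδ, hNM δ] at h1
    simp only [LinearMap.zero_apply, map_zero, LinearMap.sub_apply, hsc] at h1
    exact sub_eq_zero.mp h1.symm
  · exfalso
    apply hnonsplit
    obtain ⟨s, hs⟩ := factor_through_surj π hπ
      (LinearMap.id - (sc (a - b)⁻¹).comp (φ - sc b)) (fun x hx => by
        obtain ⟨m, rfl⟩ := hk x hx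
        simp only [LinearMap.sub_apply, LinearMap.id_apply, LinearMap.comp_apply, hsc, hφa]
        rw [← sub_smul, ← map_sub, ← mul_smul, ← map_mul,
          inv_mul_cancel₀ (sub_ne_zero.mpr hab)]
        simp)
    refine ⟨s, LinearMap.ext fun n => ?_⟩
    obtain ⟨x, rfl⟩ := hπ n
    simp [hs, hsc, hφb]
end

section
/- Let k be an algebraically closed field, A an associative k-algebra, and E a nonzero finite-dimensional left A-module whose composition factors are pairwise non-isomorphic. Then E is indecomposable if and only if End_A(E) = k·id_E. -/
/-- A nilpotent endomorphism of a module with a multiplicity-free filtration is zero. -/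
theorem nilpotent_eq_zero_aux
    (A : Type) [Ring A] (E : Type) [AddCommGroup E] [Module A E]
    (r : ℕ) (V : Fin r → Type) [∀ i, AddCommGroup (V i)] [∀ i, Module A (V i)]
    (hsimple : ∀ i, IsSimpleModule A (V i))
    (hpairwise : ∀ i j, i ≠ j → IsEmpty (V i ≃ₗ[A] V j))
    (F : Fin (r + 1) → Submodule A E) (hmono : Monotone F)
    (hbot : F 0 = ⊥) (htop : F (Fin.last r) = ⊤)
    (hfactor : ∀ i : Fin r, Nonempty
      ((↥(F i.succ) ⧸ Submodule.comap (F i.succ).subtype (F i.castSucc)) ≃ₗ[A] V i))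
    (ψ : Module.End A E) (n : ℕ) (hn : ψ ^ n = 0) : ψ = 0 := by
  have hle : ∀ i : Fin r, F i.castSucc ≤ F i.succ := fun i => hmono (Fin.castSucc_le_succ i)
  have hQ : ∀ i : Fin r, IsSimpleModule A
      (↥(F i.succ) ⧸ Submodule.comap (F i.succ).subtype (F i.castSucc)) := fun i => by
    have := hsimple i
    obtain ⟨e⟩ := hfactor i
    exact IsSimpleModule.congr e
  have hcov : ∀ i : Fin r, F i.castSucc ⋖ F i.succ := fun i =>
    (covBy_iff_quot_is_simple (hle i)).2 (hQ i)
  have key : ∀ i : Fin (r + 1), F i ≤ LinearMap.ker ψ := by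
    intro i
    induction i using Fin.induction with
    | zero => rw [hbot]; exact bot_le
    | succ i ih =>
      by_contra hnot
      -- the kernel of `ψ` on `F i.succ` is `F i.castSucc`
      have hinf : F i.succ ⊓ LinearMap.ker ψ = F i.castSucc := by
        rcases (hcov i).eq_or_eq (le_inf (hle i) ih) inf_le_left with h | h
        · exact h
        · exact absurd (inf_eq_left.1 h) hnot
      set g : ↥(F i.succ) →ₗ[A] E := ψ.comp (F i.succ).subtype with hg
      have hker : Submodule.comap (F i.succ).subtype (F i.castSucc) = LinearMap.ker g := by
        ext x
        rw [← hinf]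
        simp [hg]
      have e1 := (Submodule.quotEquivOfEq _ _ hker).trans g.quotKerEquivRange
      have hS : LinearMap.range g = (F i.succ).map ψ := by
        rw [hg, LinearMap.range_comp, Submodule.range_subtype]
      have := hQ i
      have hSs : IsSimpleModule A (LinearMap.range g) := IsSimpleModule.congr e1.symm
      have hatom : IsAtom (LinearMap.range g) := isSimpleModule_iff_isAtom.1 hSs
      generalize LinearMap.range g = S at *
      obtain ⟨j, hj1, hj2⟩ : ∃ j : Fin r, ¬ S ≤ F j.castSucc ∧ S ≤ F j.succ := by
        by_contra! hcon
        have : ∀ j : Fin (r + 1), ¬ S ≤ F j := by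
          intro j
          induction j using Fin.induction with
          | zero => rw [hbot]; exact fun h => hatom.1 (le_bot_iff.1 h)
          | succ j ih => exact hcon j ih
        exact this (Fin.last r) (htop ▸ le_top)
      let h : S →ₗ[A] (↥(F j.succ) ⧸ Submodule.comap (F j.succ).subtype (F j.castSucc)) :=
        (Submodule.mkQ _).comp (Submodule.inclusion hj2)
      have hne : h ≠ 0 := by
        intro h0
        apply hj1
        intro x hx
        have := LinearMap.congr_fun h0 ⟨x, hx⟩
        simpa [h] using this
      have := hQ j
      let e2 := LinearEquiv.ofBijective h (LinearMap.bijective_of_ne_zero hne)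
      obtain ⟨a⟩ := hfactor i
      obtain ⟨b⟩ := hfactor j
      have hij : i = j := by
        by_contra hij
        exact (hpairwise i j hij).false (((a.symm.trans e1).trans e2).trans b)
      subst hij
      have hsup : F i.castSucc ⊔ S = F i.succ := by
        rcases (hcov i).eq_or_eq le_sup_left (sup_le (hle i) hj2) with h | h
        · exact absurd (sup_eq_left.1 h) hj1
        · exact h
      have hmap : S.map ψ = S := by
        have h1 : (F i.castSucc).map ψ = ⊥ := by
          rw [eq_bot_iff, Submodule.map_le_iff_le_comap]; exact ih
        conv_rhs => rw [hS, ← hsup, Submodule.map_sup, h1, bot_sup_eq]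
      have hpow : ∀ m : ℕ, S.map (ψ ^ m) = S := by
        intro m
        induction m with
        | zero => rw [pow_zero, Module.End.one_eq_id, Submodule.map_id]
        | succ m ihm => rw [pow_succ, Module.End.mul_eq_comp, Submodule.map_comp, hmap, ihm]
      apply hatom.1
      rw [← hpow n, hn, Submodule.map_zero]
  have := key (Fin.last r)
  rw [htop, top_le_iff] at this
  exact LinearMap.ker_eq_top.1 this

/-- a nonzero finite-dimensional module over a `k`-algebra (with `k`
algebraically closed) whose composition factors are pairwise non-isomorphic is
indecomposable if and only if all of its endomorphisms are scalars. -/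
theorem indecomposable_iff_endomorphisms_are_scalars
    (k : Type) [Field k] [IsAlgClosed k]
    (A : Type) [Ring A] [Algebra k A]
    (E : Type) [AddCommGroup E] [Module A E] [Module k E] [IsScalarTower k A E]
    [FiniteDimensional k E] [Nontrivial E]
    (r : ℕ) (V : Fin r → Type) [∀ i, AddCommGroup (V i)] [∀ i, Module A (V i)]
    (hsimple : ∀ i, IsSimpleModule A (V i))
    (hpairwise : ∀ i j, i ≠ j → IsEmpty (V i ≃ₗ[A] V j))
    (F : Fin (r + 1) → Submodule A E) (hmono : Monotone F)
    (hbot : F 0 = ⊥) (htop : F (Fin.last r) = ⊤)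
    (hfactor : ∀ i : Fin r, Nonempty
      ((↥(F i.succ) ⧸ Submodule.comap (F i.succ).subtype (F i.castSucc)) ≃ₗ[A] V i)) :
    ((∀ p q : Submodule A E, IsCompl p q → p = ⊥ ∨ q = ⊥) ↔
      (∀ φ : E →ₗ[A] E, ∃ c : k, ∀ x : E, φ x = c • x)) := by
  constructor
  · intro hind φ
    have : IsNoetherian A E := isNoetherian_of_tower k inferInstance
    have : IsArtinian A E := isArtinian_of_tower k inferInstance
    obtain ⟨c, hc⟩ := Module.End.exists_eigenvalue (φ.restrictScalars k : Module.End k E)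
    obtain ⟨v, hv⟩ := hc.exists_hasEigenvector
    have hv1 : φ v = c • v := hv.apply_eq_smul
    let ψ : Module.End A E := φ - c • LinearMap.id
    have hψ : ∀ x, ψ x = φ x - c • x := fun x => rfl
    obtain ⟨n, hn1, hn2⟩ := ((Filter.eventually_ge_atTop 1).and
      (LinearMap.eventually_isCompl_ker_pow_range_pow ψ)).exists
    have hnil : ψ ^ n = 0 := by
      rcases hind _ _ hn2 with h | h
      · exfalso
        apply hv.2
        have : v ∈ LinearMap.ker (ψ ^ n) := by
          obtain ⟨m, rfl⟩ := Nat.exists_eq_add_of_le' hn1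
          rw [LinearMap.mem_ker, pow_succ, Module.End.mul_apply, hψ, hv1, sub_self, map_zero]
        rw [h] at this
        exact (Submodule.mem_bot A).1 this
      · exact LinearMap.range_eq_bot.1 h
    have h0 := nilpotent_eq_zero_aux A E r V hsimple hpairwise F hmono hbot htop hfactor ψ n hnil
    refine ⟨c, fun x => ?_⟩
    have := hψ x
    rw [h0] at this
    exact (sub_eq_zero.1 this.symm)
  · intro hsc p q hpq
    obtain ⟨c, hc⟩ := hsc (p.subtype.comp (p.projectionOnto q hpq))
    by_cases h : c = 0
    · left
      rw [eq_bot_iff]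
      intro x hx
      have := hc x
      rw [h, zero_smul] at this
      have h2 := Submodule.projectionOnto_apply_left hpq ⟨x, hx⟩
      simp only [LinearMap.comp_apply] at this
      simp only at h2
      rw [h2] at this
      simpa using this
    · right
      rw [eq_bot_iff]
      intro x hx
      have := hc x
      simp only [LinearMap.comp_apply] at this
      rw [Submodule.projectionOnto_apply_right hpq ⟨x, hx⟩, map_zero] at this
      exact (Submodule.mem_bot A).2 ((smul_eq_zero.1 this.symm).resolve_left h)
end
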